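/- arXiv:2308.09996 — 2 statements merged into one kernel-verified Lean document; each statement's English description precedes it below -/
import Mathlib

section
/- For every finite simple graph G with at least one edge, the v-number of the cover ideal satisfies v(J(G)) ≤ pd_R(R/I(G)) − 1, where pd_R denotes projective dimension as a graded R-module. (By Terai's formula this is equivalent to v(J(G)) ≤ reg(R/J(G)).) -/
open MvPolynomial CategoryTheory

noncomputable section

/-- A set of vertices is a vertex cover if it meets every edge. -/
def IsVertexCover {V : Type} (G : SimpleGraph V) (C : Set V) : Prop :=
  ∀ ⦃u v : V⦄, G.Adj u v → u ∈ C ∨ v ∈ C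

/-- A vertex cover minimal with respect to inclusion. -/
def IsMinimalVertexCover {V : Type} (G : SimpleGraph V) (C : Set V) : Prop :=
  IsVertexCover G C ∧ ∀ C' ⊆ C, IsVertexCover G C' → C' = C

/-- `α₀(G)`: the minimum cardinality of a vertex cover of `G`. -/
def coverNumber {V : Type} (G : SimpleGraph V) : ℕ :=
  sInf {k | ∃ C : Set V, IsVertexCover G C ∧ C.ncard = k}

/-- `bight(I(G))`: the maximum cardinality of a minimal vertex cover of `G`. -/
def bigHeight {V : Type} (G : SimpleGraph V) : ℕ :=
  sSup {k | ∃ C : Set V, IsMinimalVertexCover G C ∧ C.ncard = k}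

/-- The edge ideal `I(G) ⊆ K[x_v : v ∈ V]`, generated by the monomials
`x_u * x_v` over the edges `{u,v}` of `G`. -/
def edgeIdeal (K : Type) [Field K] {V : Type} (G : SimpleGraph V) :
    Ideal (MvPolynomial V K) :=
  Ideal.span {m | ∃ u v : V, G.Adj u v ∧ m = X u * X v}

/-- The cover ideal `J(G) = ⋂_{{u,v} ∈ E(G)} ⟨x_u, x_v⟩`. -/
def coverIdeal (K : Type) [Field K] {V : Type} (G : SimpleGraph V) :
    Ideal (MvPolynomial V K) :=
  ⨅ (u : V) (v : V) (_ : G.Adj u v), Ideal.span {X u, X v}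

/-- The v-number of a graded ideal `I`: the least `d ≥ 0` such that there is a
homogeneous polynomial `f` of degree `d` with `I : f` a prime ideal. -/
def vNumber {K : Type} [Field K] {V : Type} (I : Ideal (MvPolynomial V K)) : ℕ :=
  sInf {d | ∃ f : MvPolynomial V K, f.IsHomogeneous d ∧
    (I.colon (Ideal.span {f})).IsPrime}

/-- The homogeneous maximal ideal `⟨x_1, …, x_n⟩` of the polynomial ring. -/
def maxIdeal (K : Type) [Field K] (V : Type) : Ideal (MvPolynomial V K) :=
  Ideal.span (Set.range (X : V → MvPolynomial V K))

/-- The depth of the module `M` with respect to the ideal `J`: the supremum of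
the lengths of regular sequences on `M` consisting of elements of `J`. -/
def mdepth {R : Type} [CommRing R] (J : Ideal R) (M : Type) [AddCommGroup M]
    [Module R M] : ℕ :=
  sSup {k | ∃ rs : List R, rs.length = k ∧ (∀ r ∈ rs, r ∈ J) ∧
    RingTheory.Sequence.IsRegular M rs}

/-- The projective dimension of an `R`-module `M`, characterized by the
vanishing of `Ext^i(M, N)` for all `i > d` and all modules `N`. -/
def projDim (R : Type) [CommRing R] (M : ModuleCat.{0} R) : ℕ :=
  sInf {d : ℕ | ∀ (N : ModuleCat.{0} R) (i : ℕ), d < i →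
    Subsingleton (((Ext R (ModuleCat.{0} R) i).obj (Opposite.op M)).obj N)}


theorem oldExt_subsingleton_iff (R : Type) [CommRing R] (M N : ModuleCat.{0} R) (i : ℕ) :
    Subsingleton (((Ext R (ModuleCat.{0} R) (i+1)).obj (Opposite.op M)).obj N) ↔
    Subsingleton (Abelian.Ext M N (i+1)) := by
  have P : ProjectiveResolution M := ProjectiveResolution.of M
  have key1 : Subsingleton (((Ext R (ModuleCat.{0} R) (i+1)).obj (Opposite.op M)).obj N) ↔
      ∀ f : P.complex.X (i+1) ⟶ N, P.complex.d (i+2) (i+1) ≫ f = 0 →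
        ∃ g, P.complex.d (i+1) i ≫ g = f := by
    rw [(P.isoExt (R := R) (i+1) N).toLinearEquiv.toEquiv.subsingleton_congr,
      ← ModuleCat.isZero_iff_subsingleton, ← HomologicalComplex.exactAt_iff_isZero_homology, 
      HomologicalComplex.exactAt_iff' _ i (i+1) (i+2) (by simp) (by simp), 
      ShortComplex.moduleCat_exact_iff]
    rfl
  have key2 : Subsingleton (Abelian.Ext M N (i+1)) ↔
      ∀ f : P.complex.X (i+1) ⟶ N, P.complex.d (i+2) (i+1) ≫ f = 0 →
        ∃ g, P.complex.d (i+1) i ≫ g = f := by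
    constructor
    · intro h f hf
      exact (P.extMk_eq_zero_iff f (i+2) rfl hf i rfl).1 (Subsingleton.elim _ _)
    · intro h
      refine subsingleton_of_forall_eq 0 fun α => ?_
      obtain ⟨f, hf, rfl⟩ := P.extMk_surjective α (i+2) rfl
      exact (P.extMk_eq_zero_iff f (i+2) rfl hf i rfl).2 (h f hf)
  rw [key1, key2]

theorem hasPD_iff (R : Type) [CommRing R] (M : ModuleCat.{0} R) (d : ℕ) :
    (∀ (N : ModuleCat.{0} R) (i : ℕ), d < i →
    Subsingleton (((Ext R (ModuleCat.{0} R) i).obj (Opposite.op M)).obj N)) ↔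
    HasProjectiveDimensionLT M (d+1) := by
  constructor
  · intro h
    refine HasProjectiveDimensionLT.mk fun i hi Y e => ?_
    obtain ⟨j, rfl⟩ := Nat.exists_eq_add_of_lt hi
    have := (oldExt_subsingleton_iff R M Y (d+j)).1 (h Y _ (by omega))
    exact Subsingleton.elim _ _
  · intro h N i hi
    obtain ⟨j, rfl⟩ := Nat.exists_eq_add_of_lt hi
    exact (oldExt_subsingleton_iff R M N (d+j)).2 (HasProjectiveDimensionLT.subsingleton M (d+1) _ (by omega) _)


theorem mem_smul_top_iff_of_projective {R F : Type} [CommRing R] [AddCommGroup F] [Module R F]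
    (s : F →ₗ[R] (F →₀ R)) (hs : Function.LeftInverse (Finsupp.linearCombination R (id : F → F)) s)
    (J : Ideal R) (y : F) : y ∈ (J • ⊤ : Submodule R F) ↔ ∀ c, s y c ∈ J := by
  constructor
  · intro h c
    refine Submodule.smul_induction_on h ?_ ?_
    · intro r hr n _
      simpa using J.mul_mem_right _ hr
    · intro a b ha hb
      simpa using J.add_mem ha hb
  · intro h
    rw [← hs y, Finsupp.linearCombination_apply]
    exact Submodule.sum_mem _ fun c _ => Submodule.smul_mem_smul (h c) trivial

theorem isWeaklyRegular_of_projective {R F : Type} [CommRing R] [AddCommGroup F] [Module R F]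
    [Module.Projective R F] (rs : List R) (hR : RingTheory.Sequence.IsWeaklyRegular R rs) :
    RingTheory.Sequence.IsWeaklyRegular F rs := by
  obtain ⟨s, hs⟩ := Module.Projective.out (R := R) (P := F)
  rw [RingTheory.Sequence.isWeaklyRegular_iff] at hR ⊢
  intro i hi
  have h := hR i hi
  rw [isSMulRegular_quotient_iff_mem_of_smul_mem] at h ⊢
  intro y hy
  rw [mem_smul_top_iff_of_projective s hs] at hy ⊢
  intro c
  have := h (s y c) (by simpa using hy c)
  simpa using this

/-- Modules killed by a weakly regular sequence have vanishing low Ext. -/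
theorem ext_eq_zero_of_weaklyRegular (R : Type) [CommRing R] (N : ModuleCat.{0} R) (rs : List R)
    (hN : ∀ r ∈ rs, ∀ y : N, r • y = 0) : ∀ (F : ModuleCat.{0} R)
    (_ : RingTheory.Sequence.IsWeaklyRegular F rs) (i : ℕ) (_ : i < rs.length)
    (e : Abelian.Ext N F i), e = 0 := by
  induction rs with
  | nil => intro F hF i hi; simp at hi
  | cons r rs ih =>
    intro F hF i hi e
    rw [RingTheory.Sequence.isWeaklyRegular_cons_iff] at hF
    have hS : (ModuleCat.smulShortComplex F r).ShortExact := hF.1.smulShortComplex_shortExact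
    have h1 : e.comp (Abelian.Ext.mk₀ (r • 𝟙 F)) (add_zero i) = 0 := by
      have h3 : (r • 𝟙 N) = 0 := by
        ext y; exact hN r List.mem_cons_self y
      rw [Abelian.Ext.mk₀_smul, Abelian.Ext.comp_smul]
      have : r • e = (Abelian.Ext.mk₀ (r • 𝟙 N)).comp e (zero_add i) := by
        rw [Abelian.Ext.mk₀_smul, Abelian.Ext.smul_comp, Abelian.Ext.mk₀_id_comp]
      rw [Abelian.Ext.comp_mk₀_id, this, h3, Abelian.Ext.mk₀_zero, Abelian.Ext.zero_comp]
    cases i with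
    | zero =>
      have := hS.mono_f
      refine Abelian.Ext.postcomp_mk₀_injective_of_mono N (ModuleCat.smulShortComplex F r).f ?_
      exact h1.trans (map_zero _).symm
    | succ j =>
      obtain ⟨x, hx⟩ := Abelian.Ext.covariant_sequence_exact₁ N hS e h1 rfl
      have := ih (fun r' hr' => hN r' (by simp [hr'])) _ hF.2 j (by simpa using hi) x
      rw [← hx, this]
      apply Abelian.Ext.zero_comp

theorem ext_eq_zero_of_pd (R : Type) [CommRing R] (N : ModuleCat.{0} R) (rs : List R)
    (hN : ∀ r ∈ rs, ∀ y : N, r • y = 0) (hR : RingTheory.Sequence.IsWeaklyRegular R rs)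
    (D : ℕ) : ∀ (M : ModuleCat.{0} R) (_ : HasProjectiveDimensionLT M (D+1)) (i : ℕ)
    (_ : i + D < rs.length) (e : Abelian.Ext N M i), e = 0 := by
  induction D with
  | zero =>
    intro M hM i hi e
    have hp : Projective M := projective_iff_hasProjectiveDimensionLT_one.2 hM
    have : Module.Projective R M := (IsProjective.iff_projective M).2 hp
    exact ext_eq_zero_of_weaklyRegular R N rs hN M (isWeaklyRegular_of_projective rs hR) i hi e
  | succ D ih =>
    intro M hM i hi e
    have hS := M.shortExact_projectiveShortComplex
    have hp : Projective M.projectiveShortComplex.X₂ := 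
      (IsProjective.iff_projective _).1 inferInstance
    have h1 : HasProjectiveDimensionLT M.projectiveShortComplex.X₁ (D+1) :=
      (hS.hasProjectiveDimensionLT_X₃_iff D hp).1 hM
    obtain ⟨x, hx⟩ := Abelian.Ext.covariant_sequence_exact₃ N hS (n₀ := i) e rfl 
      (ih M.projectiveShortComplex.X₁ h1 (i+1) (by omega) _)
    have hx0 : x = 0 := by
      have : Module.Projective R M.projectiveShortComplex.X₂ := inferInstance
      exact ext_eq_zero_of_weaklyRegular R N rs hN _ 
        (isWeaklyRegular_of_projective rs hR) i (by omega) x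
    rw [← hx, hx0]
    apply Abelian.Ext.zero_comp

/-- If `pd M ≤ D`, and `Q` is generated by a regular sequence of length `> D + 1`, then
every map from `Q` to `M` extends to `R`. -/
theorem exists_extension_of_pd (R : Type) [CommRing R] (Q : Ideal R) (rs : List R)
    (hQ : ∀ r ∈ rs, r ∈ Q) (hR : RingTheory.Sequence.IsWeaklyRegular R rs)
    (D : ℕ) (hD : 1 + D < rs.length) (M : Type) [AddCommGroup M] [Module R M]
    (hM : HasProjectiveDimensionLT (ModuleCat.of R M) (D+1)) (φ : Q →ₗ[R] M) :
    ∃ m : M, ∀ q : Q, φ q = (q : R) • m := by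
  let S : ShortComplex (ModuleCat.{0} R) := ShortComplex.mk (ModuleCat.ofHom Q.subtype)
    (ModuleCat.ofHom Q.mkQ) (by ext x; exact (Submodule.Quotient.mk_eq_zero Q).2 x.2)
  have hS : S.ShortExact := by
    refine { exact := ?_, mono_f := ?_, epi_g := ?_ }
    · rw [ShortComplex.moduleCat_exact_iff]
      intro x hx
      exact ⟨⟨x, (Submodule.Quotient.mk_eq_zero Q).1 hx⟩, rfl⟩
    · rw [ModuleCat.mono_iff_injective]; exact Q.injective_subtype
    · rw [ModuleCat.epi_iff_surjective]; exact Q.mkQ_surjective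
  have hz := ext_eq_zero_of_pd R S.X₃ rs (by
    intro r hr y
    obtain ⟨y, rfl⟩ := Q.mkQ_surjective y
    rw [← map_smul]
    exact (Submodule.Quotient.mk_eq_zero Q).2 (Q.mul_mem_right _ (hQ r hr))) hR D _ hM 1 hD
  obtain ⟨x, hx⟩ := Abelian.Ext.contravariant_sequence_exact₁ hS (ModuleCat.of R M) 
    (Abelian.Ext.mk₀ (ModuleCat.ofHom φ : S.X₁ ⟶ _)) (n₁ := 1) rfl (hz _)
  obtain ⟨g, rfl⟩ := (Abelian.Ext.mk₀_bijective _ _).2 x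
  rw [Abelian.Ext.mk₀_comp_mk₀] at hx
  have h := (Abelian.Ext.mk₀_bijective _ _).1 hx
  refine ⟨g.hom (1 : R), fun q => ?_⟩
  have h2 := ConcreteCategory.congr_hom h q
  rw [← map_smul, smul_eq_mul, mul_one]
  exact h2.symm

theorem isWeaklyRegular_X {K : Type} [Field K] {V : Type} (l : List V) (hl : l.Nodup) :
    RingTheory.Sequence.IsWeaklyRegular (MvPolynomial V K)
      (l.map (X : V → MvPolynomial V K)) := by
  rw [RingTheory.Sequence.isWeaklyRegular_iff]
  intro i hi
  rw [isSMulRegular_quotient_iff_mem_of_smul_mem]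
  intro p hp
  have e : (Ideal.ofList (List.take i (l.map (X : V → MvPolynomial V K))) • ⊤ : 
      Ideal (MvPolynomial V K)) = Ideal.span (X '' {v | v ∈ l.take i}) := by
    rw [smul_eq_mul, Ideal.mul_top, Ideal.ofList]
    congr 1
    ext x; simp [← List.map_take]
  rw [e, mem_ideal_span_X_image] at hp ⊢
  intro m hm
  simp only [List.length_map] at hi
  obtain ⟨v, hv, hv2⟩ := hp (m + Finsupp.single l[i] 1) (by
    simp only [List.getElem_map, smul_eq_mul, mem_support_iff] at hm ⊢
    rw [add_comm, coeff_X_mul]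
    exact hm)
  refine ⟨v, hv, ?_⟩
  have hne : l[i] ≠ v := by
    rintro rfl
    simp only [Set.mem_ofPred_eq] at hv
    rw [List.mem_take_iff_getElem] at hv
    obtain ⟨j, hj, hj2⟩ := hv
    have := (List.Nodup.getElem_inj_iff hl).1 hj2
    omega
  simpa [Finsupp.single_apply, hne] using hv2

theorem hasPD_monomial {K : Type} [Field K] {V : Type} (k : ℕ) :
    ∀ (s : Finset (V →₀ ℕ)) (_ : s.card ≤ k),
    HasProjectiveDimensionLT (ModuleCat.of (MvPolynomial V K)
      (MvPolynomial V K ⧸ Ideal.span ((fun m => monomial m (1:K)) '' (s : Set (V →₀ ℕ))))) (k+1) := by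
  classical
  induction k with
  | zero =>
    intro s hs
    obtain rfl : s = ∅ := by simpa using hs
    have e : (MvPolynomial V K ⧸ Ideal.span ((fun m => monomial m (1:K)) ''
        ((∅ : Finset (V →₀ ℕ)) : Set (V →₀ ℕ)))) ≃ₗ[MvPolynomial V K] MvPolynomial V K :=
      Submodule.quotEquivOfEqBot _ (by simp)
    have := Module.Projective.of_equiv e.symm
    exact projective_iff_hasProjectiveDimensionLT_one.1 ((IsProjective.iff_projective _).1 this)
  | succ k ih =>
    intro s hs
    rcases s.eq_empty_or_nonempty with rfl | ⟨a, ha⟩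
    · have := ih ∅ (by simp)
      exact hasProjectiveDimensionLT_of_ge _ (k+1) _ (by omega)
    · let t := s.erase a
      let t' := t.image (fun m => m - a)
      have ht : t.card ≤ k := by
        have := Finset.card_erase_of_mem ha
        simp only [t]; omega
      have ht' : t'.card ≤ k := Finset.card_image_le.trans ht
      let I (s : Finset (V →₀ ℕ)) : Ideal (MvPolynomial V K) :=
        Ideal.span ((fun m => monomial m (1:K)) '' (s : Set (V →₀ ℕ)))
      have hcol : ∀ p, p ∈ I t' ↔ monomial a (1:K) * p ∈ I t := by
        intro p
        simp only [I, mem_ideal_span_monomial_image]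
        constructor
        · intro h m hm
          rw [mem_support_iff, coeff_monomial_mul'] at hm
          split_ifs at hm with hle
          · obtain ⟨x, hx, hxm⟩ := h (m - a) (by simpa using hm)
            simp only [t', Finset.coe_image, Set.mem_image] at hx
            obtain ⟨y, hy, rfl⟩ := hx
            refine ⟨y, hy, ?_⟩
            have := tsub_le_iff_left.1 hxm
            rwa [add_tsub_cancel_of_le hle] at this
          · simp at hm
        · intro h m hm
          obtain ⟨x, hx, hxm⟩ := h (a + m) (by
            rw [mem_support_iff, coeff_monomial_mul]; simpa using hm)
          exact ⟨x - a, by simpa [t'] using ⟨x, hx, rfl⟩, tsub_le_iff_left.2 hxm⟩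
      have hst : I t ≤ I s := Ideal.span_mono (Set.image_mono (by simp [t]))
      let f : (MvPolynomial V K ⧸ I t') →ₗ[MvPolynomial V K] (MvPolynomial V K ⧸ I t) :=
        Submodule.mapQ _ _ (LinearMap.mulLeft (MvPolynomial V K) (monomial a (1:K)))
          (fun p hp => (hcol p).1 hp)
      let g : (MvPolynomial V K ⧸ I t) →ₗ[MvPolynomial V K] (MvPolynomial V K ⧸ I s) :=
        Submodule.factor hst
      have has : I s = Ideal.span {monomial a (1:K)} ⊔ I t := by
        simp only [I]
        rw [← Ideal.span_union, ← Finset.insert_erase ha, Finset.coe_insert, Set.image_insert_eq]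
        simp [t]
      have hama : monomial a (1:K) ∈ I s := by
        rw [has]; exact Ideal.mem_sup_left (Ideal.subset_span rfl)
      have hfg : ∀ x, g (f x) = 0 := by
        intro x
        obtain ⟨p, rfl⟩ := Submodule.mkQ_surjective _ x
        exact (Submodule.Quotient.mk_eq_zero _).2 ((I s).mul_mem_right p hama)
      let S : ShortComplex (ModuleCat.{0} (MvPolynomial V K)) :=
        ShortComplex.mk (ModuleCat.ofHom f) (ModuleCat.ofHom g) (ModuleCat.hom_ext (LinearMap.ext hfg))
      have hS : S.ShortExact := by
        refine { exact := ?_, mono_f := ?_, epi_g := ?_ }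
        · rw [ShortComplex.moduleCat_exact_iff]
          intro x hx
          obtain ⟨p, rfl⟩ := Submodule.mkQ_surjective _ x
          have hp : p ∈ I s := (Submodule.Quotient.mk_eq_zero _).1 hx
          rw [has, Submodule.mem_sup] at hp
          obtain ⟨y, hy, z, hz, rfl⟩ := hp
          obtain ⟨c, rfl⟩ := Ideal.mem_span_singleton'.1 hy
          refine ⟨Submodule.mkQ (I t') c, ?_⟩
          refine (Submodule.Quotient.eq _).2 ?_
          have : monomial a (1:K) * c - (c * monomial a 1 + z) = -z := by ring
          exact this ▸ neg_mem hz
        · rw [ModuleCat.mono_iff_injective]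
          refine (injective_iff_map_eq_zero f).2 ?_
          intro x hx
          obtain ⟨p, rfl⟩ := Submodule.mkQ_surjective _ x
          exact (Submodule.Quotient.mk_eq_zero _).2
            ((hcol p).2 ((Submodule.Quotient.mk_eq_zero _).1 hx))
        · rw [ModuleCat.epi_iff_surjective]
          exact Submodule.factor_surjective hst
      exact hS.hasProjectiveDimensionLT_X₃ (k+1) (ih t' ht')
        (@hasProjectiveDimensionLT_of_ge _ _ _ _ (k+1) _ (by omega) (ih t ht))

theorem edgeIdeal_eq (K : Type) [Field K] {V : Type} (G : SimpleGraph V) :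
    edgeIdeal K G = Ideal.span ((fun m => monomial m (1:K)) ''
      {m | ∃ u v : V, G.Adj u v ∧ m = Finsupp.single u 1 + Finsupp.single v 1}) := by
  unfold edgeIdeal
  congr 1
  ext p
  constructor
  · rintro ⟨u, v, h, rfl⟩
    exact ⟨_, ⟨u, v, h, rfl⟩, by simp [X, monomial_mul]⟩
  · rintro ⟨_, ⟨u, v, h, rfl⟩, rfl⟩
    exact ⟨u, v, h, by simp [X, monomial_mul]⟩

theorem mem_edgeIdeal {K : Type} [Field K] {V : Type} {G : SimpleGraph V}
    {p : MvPolynomial V K} (hp : p ∈ edgeIdeal K G) (m : V →₀ ℕ) (hm : coeff m p ≠ 0) :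
    ∃ u v, G.Adj u v ∧ m u ≠ 0 ∧ m v ≠ 0 := by
  rw [edgeIdeal_eq, mem_ideal_span_monomial_image] at hp
  obtain ⟨_, ⟨u, v, h, rfl⟩, hle⟩ := hp m (mem_support_iff.2 hm)
  have h1 := hle u
  have h2 := hle v
  simp only [Finsupp.add_apply, Finsupp.single_eq_same] at h1 h2
  exact ⟨u, v, h, by omega, by omega⟩

theorem finite_pd_edgeIdeal (K : Type) [Field K] {V : Type} [Finite V] (G : SimpleGraph V) :
    ∃ D, HasProjectiveDimensionLT (ModuleCat.of (MvPolynomial V K)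
      (MvPolynomial V K ⧸ edgeIdeal K G)) (D + 1) := by
  have hfin : {m : V →₀ ℕ | ∃ u v : V, G.Adj u v ∧
      m = Finsupp.single u 1 + Finsupp.single v 1}.Finite := by
    refine (Set.finite_range (fun p : V × V => Finsupp.single p.1 1 + Finsupp.single p.2 1)).subset ?_
    rintro _ ⟨u, v, _, rfl⟩
    exact ⟨(u, v), rfl⟩
  have := hasPD_monomial (K := K) _ hfin.toFinset le_rfl
  rw [Set.Finite.coe_toFinset] at this
  rw [edgeIdeal_eq]
  exact ⟨_, this⟩

open Classical in
/-- Substitution that sets the variables outside `B` to zero. -/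
def restrictVars (K : Type) [Field K] {V : Type} (B : Set V) :
    MvPolynomial V K →ₐ[K] MvPolynomial V K :=
  aeval (fun v => if v ∈ B then X v else 0)

theorem restrictVars_X_mem {K : Type} [Field K] {V : Type} {B : Set V} {v : V} (h : v ∈ B) :
    restrictVars K B (X v) = X v := by
  simp [restrictVars, h]

theorem restrictVars_X_notMem {K : Type} [Field K] {V : Type} {B : Set V} {v : V} (h : v ∉ B) :
    restrictVars K B (X v) = 0 := by
  simp [restrictVars, h]

theorem restrictVars_sub_mem {K : Type} [Field K] {V : Type} (B : Set V) (p : MvPolynomial V K) :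
    restrictVars K B p - p ∈ Ideal.span (X '' Bᶜ : Set (MvPolynomial V K)) := by
  rw [← Ideal.Quotient.eq]
  have h : (Ideal.Quotient.mkₐ K (Ideal.span (X '' Bᶜ : Set (MvPolynomial V K)))).comp
      (restrictVars K B) = Ideal.Quotient.mkₐ K _ := by
    apply MvPolynomial.algHom_ext
    intro v
    by_cases hv : v ∈ B
    · simp [restrictVars_X_mem hv]
    · simp only [AlgHom.comp_apply, restrictVars_X_notMem hv, map_zero]
      symm
      exact Ideal.Quotient.eq_zero_iff_mem.2 (Ideal.subset_span ⟨v, hv, rfl⟩)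
  exact DFunLike.congr_fun h p

theorem isPrime_span_X_image (K : Type) [Field K] {V : Type} (S : Set V) :
    (Ideal.span (X '' S : Set (MvPolynomial V K))).IsPrime := by
  have : Ideal.span (X '' S : Set (MvPolynomial V K)) =
      RingHom.ker (restrictVars K Sᶜ) := by
    apply le_antisymm
    · rw [Ideal.span_le]
      rintro _ ⟨v, hv, rfl⟩
      exact restrictVars_X_notMem (by simpa using hv)
    · intro p hp
      have h := restrictVars_sub_mem Sᶜ p
      rw [RingHom.mem_ker] at hp
      rw [hp, compl_compl, zero_sub] at h
      simpa using h
  rw [this]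
  exact RingHom.ker_isPrime _

theorem vNumber_le {K : Type} [Field K] {V : Type} [Fintype V] [DecidableEq V]
    (G : SimpleGraph V) (S : Finset V)
    (u v : V) (huv : G.Adj u v) (hu : u ∉ S) (hv : v ∉ S)
    (hS : ∀ a b, G.Adj a b → a ∉ S → b ∉ S → (a = u ∧ b = v) ∨ (a = v ∧ b = u)) :
    vNumber (coverIdeal K G) ≤ S.card := by
  refine Nat.sInf_le ⟨∏ w ∈ S, X w, ?_, ?_⟩
  · have := IsHomogeneous.prod S (fun w => (X w : MvPolynomial V K)) (fun _ => 1)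
      (fun w _ => isHomogeneous_X K w)
    simpa using this
  · have hP : ∀ a b : V, (Ideal.span {(X a : MvPolynomial V K), X b}).IsPrime := by
      intro a b
      have := isPrime_span_X_image K ({a, b} : Set V)
      rwa [Set.image_pair] at this
    have hX : ∀ a b w : V, (X w : MvPolynomial V K) ∈
        Ideal.span {(X a : MvPolynomial V K), X b} → w = a ∨ w = b := by
      intro a b w h
      rw [← Set.image_pair, mem_ideal_span_X_image] at h
      obtain ⟨i, hi, hne⟩ := h (Finsupp.single w 1) (by simp [mem_support_iff, coeff_X'])
      have : w = i := by
        by_contra hc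
        simp [Finsupp.single_apply, hc] at hne
      subst this
      simpa using hi
    have key : (coverIdeal K G).colon (Ideal.span {∏ w ∈ S, (X w : MvPolynomial V K)}) =
        Ideal.span {(X u : MvPolynomial V K), X v} := by
      ext p
      rw [Ideal.mem_colon_span_singleton]
      simp only [coverIdeal, Ideal.mem_iInf]
      constructor
      · intro h
        rcases (hP u v).mem_or_mem (h u v huv) with h1 | h1
        · exact h1
        · exfalso
          obtain ⟨w, hw, hw2⟩ := ((hP u v).prod_mem_iff).1 h1
          rcases hX u v w hw2 with rfl | rfl
          · exact hu hw
          · exact hv hw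
      · intro hp a b hab
        by_cases ha : a ∈ S
        · refine Ideal.mul_mem_left _ _ (Ideal.mem_of_dvd _ (Finset.dvd_prod_of_mem _ ha) ?_)
          exact Ideal.subset_span (by simp)
        by_cases hb : b ∈ S
        · refine Ideal.mul_mem_left _ _ (Ideal.mem_of_dvd _ (Finset.dvd_prod_of_mem _ hb) ?_)
          exact Ideal.subset_span (by simp)
        rcases hS a b hab ha hb with ⟨rfl, rfl⟩ | ⟨rfl, rfl⟩
        · exact Ideal.mul_mem_right _ _ hp
        · rw [Set.pair_comm]
          exact Ideal.mul_mem_right _ _ hp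
    rw [key]
    exact hP u v

/-- The main lower bound for the projective dimension. -/
theorem pd_lower_bound {K : Type} [Field K] {V : Type} [Fintype V] [DecidableEq V]
    (G : SimpleGraph V) (A : Finset V) (hA : ∀ a ∈ A, ∀ b ∈ A, ¬ G.Adj a b)
    (V₁ V₂ : Set V) (u v : V) (hu : u ∈ V₁) (hv : v ∈ V₂)
    (hV₁ : ∀ w ∈ V₁, w ∉ A ∧ ∀ a ∈ A, ¬ G.Adj a w)
    (hV₂ : ∀ w ∈ V₂, w ∉ A ∧ ∀ a ∈ A, ¬ G.Adj a w)
    (hcov : ∀ w, w ∈ A ∨ w ∈ V₁ ∨ w ∈ V₂ ∨ ∃ a ∈ A, G.Adj a w)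
    (hjoin : ∀ x ∈ V₁, ∀ y ∈ V₂, G.Adj x y) (D : ℕ)
    (hD : HasProjectiveDimensionLT (ModuleCat.of (MvPolynomial V K)
      (MvPolynomial V K ⧸ edgeIdeal K G)) (D + 1)) :
    Fintype.card V - A.card ≤ 1 + D := by
  by_contra hlt
  push Not at hlt
  have hvu : v ∉ V₁ := fun h => G.loopless.irrefl v (hjoin v h v hv)
  let B : Set V := ↑A ∪ V₁
  let Q : Ideal (MvPolynomial V K) := Ideal.span (X '' (↑A : Set V)ᶜ)
  let I := edgeIdeal K G
  let xA : MvPolynomial V K := ∏ a ∈ A, X a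
  have hEdge : ∀ a b, G.Adj a b → (X a * X b : MvPolynomial V K) ∈ I := fun a b h =>
    Ideal.subset_span ⟨a, b, h, rfl⟩
  have hρQ : ∀ q ∈ Q, restrictVars K B q ∈ Ideal.span (X '' V₁ : Set (MvPolynomial V K)) := by
    have : Q ≤ Ideal.comap (restrictVars K B) (Ideal.span (X '' V₁)) := by
      rw [Ideal.span_le]
      rintro _ ⟨w, hw, rfl⟩
      simp only [SetLike.mem_coe, Ideal.mem_comap]
      by_cases h : w ∈ V₁
      · have hwB : w ∈ B := Or.inr h
        rw [restrictVars_X_mem hwB]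
        exact Ideal.subset_span ⟨w, h, rfl⟩
      · rw [restrictVars_X_notMem]
        · exact zero_mem _
        · rintro (h' | h')
          · exact hw h'
          · exact h h'
    exact fun q hq => this hq
  have hprod : ∀ a ∈ Ideal.span (X '' V₁ : Set (MvPolynomial V K)),
      ∀ b ∈ Ideal.span (X '' Bᶜ : Set (MvPolynomial V K)), xA * (a * b) ∈ I := by
    intro a ha b hb
    have h1 : Ideal.span (X '' V₁ : Set (MvPolynomial V K)) * Ideal.span (X '' Bᶜ) ≤
        Submodule.comap (LinearMap.mulLeft (MvPolynomial V K) xA) I := by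
      rw [Ideal.span_mul_span', Ideal.span_le]
      rintro _ ⟨_, ⟨x, hx, rfl⟩, _, ⟨y, hy, rfl⟩, rfl⟩
      change xA * (X x * X y) ∈ I
      rcases hcov y with h | h | h | ⟨a, ha, h⟩
      · exact (hy (Or.inl h)).elim
      · exact (hy (Or.inr h)).elim
      · exact Ideal.mul_mem_left _ _ (hEdge _ _ (hjoin x hx y h))
      · obtain ⟨c, hc⟩ := Finset.dvd_prod_of_mem (fun a => (X a : MvPolynomial V K)) ha
        have : xA * (X x * X y) = (c * X x) * (X a * X y) := by
          simp only [xA, hc]; ring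
        rw [this]
        exact Ideal.mul_mem_left _ _ (hEdge _ _ h)
    exact h1 (Ideal.mul_mem_mul ha hb)
  let φ : Q →ₗ[MvPolynomial V K] (MvPolynomial V K ⧸ I) :=
    { toFun := fun q => Ideal.Quotient.mk I (xA * restrictVars K B q)
      map_add' := fun x y => by simp [mul_add]
      map_smul' := fun g q => by
        have : (g • Ideal.Quotient.mk I (xA * restrictVars K B q)) =
          Ideal.Quotient.mk I (g * (xA * restrictVars K B q)) := rfl
        rw [RingHom.id_apply, this, Ideal.Quotient.eq]
        have h2 := hprod _ (hρQ q q.2) _ (restrictVars_sub_mem B g)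
        have e : xA * restrictVars K B (↑(g • q)) - g * (xA * restrictVars K B q) =
            xA * (restrictVars K B q * (restrictVars K B g - g)) := by
          simp only [Submodule.coe_smul, smul_eq_mul, map_mul]; ring
        rw [e]; exact h2 }
  have hcard : (Aᶜ.toList.map (X : V → MvPolynomial V K)).length = Fintype.card V - A.card := by
    simp [Finset.card_compl]
  obtain ⟨m, hm⟩ := exists_extension_of_pd (MvPolynomial V K) Q
    (Aᶜ.toList.map (X : V → MvPolynomial V K)) (by
      intro r hr
      simp only [List.mem_map, Finset.mem_toList, Finset.mem_compl] at hr
      obtain ⟨w, hw, rfl⟩ := hr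
      exact Ideal.subset_span ⟨w, by simpa using hw, rfl⟩)
    (isWeaklyRegular_X _ (Finset.nodup_toList _)) D (by rw [hcard]; exact hlt) _ hD φ
  obtain ⟨p, rfl⟩ := Ideal.Quotient.mk_surjective m
  let α : V →₀ ℕ := ∑ a ∈ A, Finsupp.single a 1
  have hxA : xA = monomial α 1 := by
    simp only [xA, α, X, monomial_sum_one]
  have hα : ∀ w, w ∉ A → α w = 0 := by
    intro w hw
    simp only [α, Finsupp.finsetSum_apply]
    refine Finset.sum_eq_zero fun a ha => ?_
    rw [Finsupp.single_apply, if_neg]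
    rintro rfl; exact hw ha
  have hcoef : ∀ w, w ∉ A → (∀ a ∈ A, ¬ G.Adj a w) → ∀ g ∈ I,
      coeff (Finsupp.single w 1 + α) g = 0 := by
    intro w hw hwA g hg
    by_contra hc
    obtain ⟨x, y, hxy, hx, hy⟩ := mem_edgeIdeal hg _ hc
    have hmem : ∀ z, (Finsupp.single w 1 + α : V →₀ ℕ) z ≠ 0 → z = w ∨ z ∈ A := by
      intro z hz
      by_contra hcon
      push Not at hcon
      apply hz
      simp [hα z hcon.2, Finsupp.single_apply, Ne.symm hcon.1]
    rcases hmem x hx with hx1 | hx1 <;> rcases hmem y hy with hy1 | hy1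
    · rw [hx1, hy1] at hxy
      exact G.loopless.irrefl _ hxy
    · rw [hx1] at hxy
      exact hwA _ hy1 hxy.symm
    · rw [hy1] at hxy
      exact hwA _ hx1 hxy
    · exact hA _ hx1 _ hy1 hxy
  have h1 := hm ⟨X u, Ideal.subset_span ⟨u, by simpa using (hV₁ u hu).1, rfl⟩⟩
  have h2 := hm ⟨X v, Ideal.subset_span ⟨v, by simpa using (hV₂ v hv).1, rfl⟩⟩
  have h1' : xA * X u - X u * p ∈ I := by
    rw [← Ideal.Quotient.eq]
    have huB : u ∈ B := Or.inr hu
    have this : restrictVars K B (X u) = X u := restrictVars_X_mem huB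
    have h3 : Ideal.Quotient.mk I (xA * restrictVars K B (X u)) =
        Ideal.Quotient.mk I (X u * p) := h1
    rwa [this] at h3
  have h2' : xA * 0 - X v * p ∈ I := by
    rw [← Ideal.Quotient.eq]
    have : restrictVars K B (X v) = 0 := restrictVars_X_notMem (by
      rintro (h | h)
      · exact (hV₂ v hv).1 h
      · exact hvu h)
    rw [← this]
    exact h2
  have c1 := hcoef u (hV₁ u hu).1 (hV₁ u hu).2 _ h1'
  have c2 := hcoef v (hV₂ v hv).1 (hV₂ v hv).2 _ h2'
  rw [mul_comm xA, coeff_sub, coeff_X_mul, coeff_X_mul, hxA, coeff_monomial, if_pos rfl] at c1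
  rw [mul_zero, zero_sub, coeff_neg, coeff_X_mul, neg_eq_zero] at c2
  rw [c2] at c1
  simp at c1

theorem exists_good_set {V : Type} [Fintype V] [DecidableEq V] (G : SimpleGraph V)
    (hE : G.edgeSet.Nonempty) :
    ∃ (A : Finset V) (V₁ V₂ : Set V) (u v : V), (∀ a ∈ A, ∀ b ∈ A, ¬ G.Adj a b) ∧
    u ∈ V₁ ∧ v ∈ V₂ ∧ 
    (∀ w ∈ V₁, w ∉ A ∧ ∀ a ∈ A, ¬ G.Adj a w) ∧
    (∀ w ∈ V₂, w ∉ A ∧ ∀ a ∈ A, ¬ G.Adj a w) ∧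
    (∀ w, w ∈ A ∨ w ∈ V₁ ∨ w ∈ V₂ ∨ ∃ a ∈ A, G.Adj a w) ∧
    (∀ x ∈ V₁, ∀ y ∈ V₂, G.Adj x y) := by
  classical
  let good : Finset V → Prop := fun A => (∀ a ∈ A, ∀ b ∈ A, ¬ G.Adj a b) ∧
    ∃ u v, G.Adj u v ∧ (∀ a ∈ A, ¬ G.Adj a u) ∧ (∀ a ∈ A, ¬ G.Adj a v)
  obtain ⟨e, he⟩ := hE
  induction e with | _ x y =>
  have h0 : good ∅ := ⟨by simp, x, y, he, by simp, by simp⟩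
  obtain ⟨A, hA, hmax⟩ := Finset.exists_max_image (Finset.univ.filter good) Finset.card
    ⟨∅, by simpa using h0⟩
  simp only [Finset.mem_filter, Finset.mem_univ, true_and] at hA hmax
  obtain ⟨hind, u, v, huv, hu, hv⟩ := hA
  have huA : u ∉ A := fun h => hv u h huv
  have hvA : v ∉ A := fun h => hu v h huv.symm
  let H : Set V := {w | w ∉ A ∧ ∀ a ∈ A, ¬ G.Adj a w}
  refine ⟨A, {w | w ∈ H ∧ ¬ G.Adj u w}, {w | w ∈ H ∧ G.Adj u w}, u, v, hind,
    ⟨⟨huA, hu⟩, G.loopless.irrefl u⟩, ⟨⟨hvA, hv⟩, huv⟩, fun w h => h.1, fun w h => h.1, ?_, ?_⟩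
  · intro w
    by_cases h1 : w ∈ A
    · exact Or.inl h1
    by_cases h2 : ∃ a ∈ A, G.Adj a w
    · exact Or.inr (Or.inr (Or.inr h2))
    push Not at h2
    by_cases h3 : G.Adj u w
    · exact Or.inr (Or.inr (Or.inl ⟨⟨h1, h2⟩, h3⟩))
    · exact Or.inr (Or.inl ⟨⟨h1, h2⟩, h3⟩)
  · rintro x ⟨hxH, hxu⟩ y ⟨hyH, hyu⟩
    by_contra hxy
    have : good (insert x A) := by
      refine ⟨?_, u, y, hyu, ?_, ?_⟩
      · intro a ha b hb hab
        rcases Finset.mem_insert.1 ha with ha1 | ha1 <;>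
          rcases Finset.mem_insert.1 hb with hb1 | hb1
        · rw [ha1, hb1] at hab
          exact G.loopless.irrefl _ hab
        · rw [ha1] at hab
          exact hxH.2 _ hb1 hab.symm
        · rw [hb1] at hab
          exact hxH.2 _ ha1 hab
        · exact hind _ ha1 _ hb1 hab
      · intro a ha
        rcases Finset.mem_insert.1 ha with rfl | ha
        · exact fun h => hxu h.symm
        · exact hu a ha
      · intro a ha
        rcases Finset.mem_insert.1 ha with rfl | ha
        · exact hxy
        · exact hyH.2 a ha
    have := hmax _ this
    rw [Finset.card_insert_of_notMem hxH.1] at this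
    omega

/-- For every finite simple graph `G` with at least one edge,
`v(J(G)) ≤ pd(R/I(G)) - 1`. -/
theorem vNumber_coverIdeal_le_projDim_sub_one
    {K : Type} [Field K] {n : ℕ} (hn : 1 ≤ n) (G : SimpleGraph (Fin n))
    (hE : G.edgeSet.Nonempty) :
    vNumber (coverIdeal K G) ≤
      projDim (MvPolynomial (Fin n) K)
        (ModuleCat.of (MvPolynomial (Fin n) K)
          (MvPolynomial (Fin n) K ⧸ edgeIdeal K G)) - 1 := by
  obtain ⟨D₀, hD₀⟩ := finite_pd_edgeIdeal K G
  have hmem := Nat.sInf_mem (s := {d : ℕ | ∀ (N : ModuleCat.{0} (MvPolynomial (Fin n) K)) (i : ℕ),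
    d < i → Subsingleton (((Ext (MvPolynomial (Fin n) K) (ModuleCat.{0} (MvPolynomial (Fin n) K))
      i).obj (Opposite.op (ModuleCat.of (MvPolynomial (Fin n) K)
          (MvPolynomial (Fin n) K ⧸ edgeIdeal K G)))).obj N)}) ⟨D₀, (hasPD_iff _ _ _).2 hD₀⟩
  have hD := (hasPD_iff _ _ _).1 hmem
  change HasProjectiveDimensionLT _ (projDim (MvPolynomial (Fin n) K)
        (ModuleCat.of (MvPolynomial (Fin n) K)
          (MvPolynomial (Fin n) K ⧸ edgeIdeal K G)) + 1) at hD
  obtain ⟨A, V₁, V₂, u, v, hA, hu, hv, hV₁, hV₂, hcov, hjoin⟩ := exists_good_set G hE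
  have hle := pd_lower_bound G A hA V₁ V₂ u v hu hv hV₁ hV₂ hcov hjoin _ hD
  have huv := hjoin u hu v hv
  have h1 := vNumber_le (K := K) G (insert u (insert v A))ᶜ u v huv (by simp) (by simp) (by
    intro a b hab ha hb
    simp only [Finset.mem_compl, Finset.mem_insert, not_not] at ha hb
    rcases ha with rfl | rfl | ha <;> rcases hb with rfl | rfl | hb
    · exact (G.loopless.irrefl _ hab).elim
    · exact Or.inl ⟨rfl, rfl⟩
    · exact ((hV₁ _ hu).2 _ hb hab.symm).elim
    · exact Or.inr ⟨rfl, rfl⟩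
    · exact (G.loopless.irrefl _ hab).elim
    · exact ((hV₂ _ hv).2 _ hb hab.symm).elim
    · exact ((hV₁ _ hu).2 _ ha hab).elim
    · exact ((hV₂ _ hv).2 _ ha hab).elim
    · exact (hA _ ha _ hb hab).elim)
  rw [Finset.card_compl, Finset.card_insert_of_notMem, 
    Finset.card_insert_of_notMem (hV₂ v hv).1] at h1
  · omega
  · simp only [Finset.mem_insert, not_or]
    exact ⟨huv.ne, (hV₁ u hu).1⟩

end
end

section
/- Let G be a complete multipartite graph on n vertices with at least one edge. Then depth(R/I(G)) = 1; equivalently, pd_R(R/I(G)) = n − 1 (so that, by Terai's formula, reg(R/J(G)) = n − 2). -/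
open MvPolynomial CategoryTheory

noncomputable section

/-- A graph is complete multipartite if its vertex set admits a partition into
nonempty parts, each part inducing an empty graph, with any two vertices in
distinct parts adjacent. -/
def IsCompleteMultipartite {V : Type} (G : SimpleGraph V) : Prop :=
  ∃ (k : ℕ) (P : Fin k → Set V),
    (∀ i, (P i).Nonempty) ∧
    (∀ v : V, ∃! i, v ∈ P i) ∧
    (∀ i, ∀ u ∈ P i, ∀ v ∈ P i, ¬ G.Adj u v) ∧
    (∀ i j, i ≠ j → ∀ u ∈ P i, ∀ v ∈ P j, G.Adj u v)

lemma subsingleton_ext_iff {R : Type} [CommRing R] (M N : ModuleCat.{0} R) (i : ℕ) (hi : 0 < i) :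
    Subsingleton (((Ext R (ModuleCat.{0} R) i).obj (Opposite.op M)).obj N) ↔
      Subsingleton (Abelian.Ext.{0} M N i) := by
  obtain ⟨p, rfl⟩ : ∃ p, i = p + 1 := ⟨i - 1, by omega⟩
  let P := projectiveResolution M
  rw [← ModuleCat.isZero_iff_subsingleton, (P.isoExt (R := R) (p + 1) N).isZero_iff,
    ← HomologicalComplex.exactAt_iff_isZero_homology,
    HomologicalComplex.exactAt_iff' _ p (p + 1) (p + 2) (by simp) (by simp),
    ShortComplex.moduleCat_exact_iff]
  have key : ∀ f : P.complex.X (p + 1) ⟶ N, ∀ hf : P.complex.d (p + 2) (p + 1) ≫ f = 0,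
      P.extMk f (p + 2) rfl hf = 0 ↔ ∃ g : P.complex.X p ⟶ N, P.complex.d (p + 1) p ≫ g = f :=
    fun f hf => P.extMk_eq_zero_iff f (p + 2) rfl hf p rfl
  constructor
  · intro h
    refine subsingleton_of_forall_eq 0 fun e => ?_
    obtain ⟨f, hf, rfl⟩ := P.extMk_surjective e (p + 2) rfl
    rw [key]
    exact h f hf
  · intro h f hf
    exact (key f hf).1 (Subsingleton.elim _ _)

lemma projDim_eq {R : Type} [CommRing R] (M : ModuleCat.{0} R) (d : ℕ)
    (h : HasProjectiveDimensionLT M (d + 1)) (h' : ¬ HasProjectiveDimensionLT M d) :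
    projDim R M = d := by
  have key : ∀ d : ℕ, (∀ (N : ModuleCat.{0} R) (i : ℕ), d < i →
    Subsingleton (((Ext R (ModuleCat.{0} R) i).obj (Opposite.op M)).obj N)) ↔
      HasProjectiveDimensionLT M (d + 1) := by
    intro d
    rw [hasProjectiveDimensionLT_iff.{0}]
    constructor
    · intro H i hi Y e
      have := (subsingleton_ext_iff M Y i (by omega)).1 (H Y i hi)
      exact Subsingleton.elim _ _
    · intro H N i hi
      exact (subsingleton_ext_iff M N i (by omega)).2
        (subsingleton_of_forall_eq 0 fun e => H i hi e)
  unfold projDim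
  simp only [key]
  refine le_antisymm (Nat.sInf_le h) ?_
  refine le_csInf ⟨d, h⟩ fun b hb => ?_
  by_contra hlt
  have : HasProjectiveDimensionLT M (b + 1) := hb
  exact h' (hasProjectiveDimensionLT_of_ge M (b + 1) d (by omega))

/-- Multiplication by `x` on `R/A`, with cokernel `R/(A + x)`. -/
def mulSC {R : Type} [CommRing R] (A B : Ideal R) (x : R) (hB : B = A ⊔ Ideal.span {x}) :
    ShortComplex (ModuleCat.{0} R) where
  X₁ := ModuleCat.of R (R ⧸ A)
  X₂ := ModuleCat.of R (R ⧸ A)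
  X₃ := ModuleCat.of R (R ⧸ B)
  f := x • 𝟙 _
  g := ModuleCat.ofHom (Submodule.factor (hB ▸ le_sup_left : A ≤ B))
  zero := by
    apply ModuleCat.hom_ext
    apply LinearMap.ext
    intro y
    obtain ⟨y, rfl⟩ := Submodule.Quotient.mk_surjective _ y
    have : Submodule.Quotient.mk (p := B) (x * y) = 0 := by
      rw [Submodule.Quotient.mk_eq_zero, hB]
      exact Ideal.mul_mem_right _ _ (Ideal.mem_sup_right (Ideal.mem_span_singleton_self x))
    exact this

lemma mulSC_shortExact {R : Type} [CommRing R] (A B : Ideal R) (x : R)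
    (hB : B = A ⊔ Ideal.span {x}) (hx : ∀ y, x * y ∈ A → y ∈ A) :
    (mulSC A B x hB).ShortExact where
  exact := by
    rw [ShortComplex.moduleCat_exact_iff]
    intro y hy
    obtain ⟨y, rfl⟩ := Submodule.Quotient.mk_surjective _ y
    have hy' : Submodule.Quotient.mk (p := B) y = 0 := hy
    rw [Submodule.Quotient.mk_eq_zero, hB, Submodule.mem_sup] at hy'
    obtain ⟨a, ha, z, hz, rfl⟩ := hy'
    obtain ⟨c, rfl⟩ := Ideal.mem_span_singleton'.1 hz
    refine ⟨Submodule.Quotient.mk c, ?_⟩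
    have : Submodule.Quotient.mk (p := A) (x * c) = Submodule.Quotient.mk (a + c * x) := by
      rw [Submodule.Quotient.eq]
      have : x * c - (a + c * x) = - a := by ring
      rw [this]
      exact A.neg_mem ha
    exact this
  mono_f := by
    rw [ModuleCat.mono_iff_injective, injective_iff_map_eq_zero]
    intro y hy
    obtain ⟨y, rfl⟩ := Submodule.Quotient.mk_surjective _ y
    have hy' : Submodule.Quotient.mk (p := A) (x * y) = 0 := hy
    rw [Submodule.Quotient.mk_eq_zero] at hy'
    exact (Submodule.Quotient.mk_eq_zero _).2 (hx y hy')
  epi_g := by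
    rw [ModuleCat.epi_iff_surjective]
    exact Submodule.factor_surjective (hB ▸ le_sup_left : A ≤ B)

/-- The Mayer-Vietoris short complex. -/
def mvSC {R : Type} [CommRing R] (A B C D : Ideal R) (hC : C = A ⊓ B) (hD : D = A ⊔ B) :
    ShortComplex (ModuleCat.{0} R) where
  X₁ := ModuleCat.of R (R ⧸ C)
  X₂ := ModuleCat.of R ((R ⧸ A) × (R ⧸ B))
  X₃ := ModuleCat.of R (R ⧸ D)
  f := ModuleCat.ofHom ((Submodule.factor (hC ▸ inf_le_left : C ≤ A)).prod
    (Submodule.factor (hC ▸ inf_le_right : C ≤ B)))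
  g := ModuleCat.ofHom ((Submodule.factor (hD ▸ le_sup_left : A ≤ D)).coprod
    (-(Submodule.factor (hD ▸ le_sup_right : B ≤ D))))
  zero := by
    apply ModuleCat.hom_ext
    apply LinearMap.ext
    intro y
    obtain ⟨y, rfl⟩ := Submodule.Quotient.mk_surjective _ y
    have : Submodule.Quotient.mk (p := D) y + - Submodule.Quotient.mk (p := D) y = 0 := by
      simp
    exact this

lemma mvSC_shortExact {R : Type} [CommRing R] (A B C D : Ideal R) (hC : C = A ⊓ B)
    (hD : D = A ⊔ B) : (mvSC A B C D hC hD).ShortExact where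
  exact := by
    rw [ShortComplex.moduleCat_exact_iff]
    rintro ⟨y, z⟩ hy
    obtain ⟨y, rfl⟩ := Submodule.Quotient.mk_surjective _ y
    obtain ⟨z, rfl⟩ := Submodule.Quotient.mk_surjective _ z
    have hy' : Submodule.Quotient.mk (p := D) y + - Submodule.Quotient.mk (p := D) z = 0 := hy
    rw [← sub_eq_add_neg, ← Submodule.Quotient.mk_sub, Submodule.Quotient.mk_eq_zero, hD,
      Submodule.mem_sup] at hy'
    obtain ⟨a, ha, b, hb, hab⟩ := hy'
    refine ⟨Submodule.Quotient.mk (y - a), ?_⟩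
    have : (Submodule.Quotient.mk (p := A) (y - a), Submodule.Quotient.mk (p := B) (y - a)) =
        (Submodule.Quotient.mk y, Submodule.Quotient.mk z) := by
      rw [Prod.mk.injEq, Submodule.Quotient.eq, Submodule.Quotient.eq]
      constructor
      · have : y - a - y = - a := by ring
        rw [this]; exact A.neg_mem ha
      · have : y - a - z = b := by linear_combination - hab
        rw [this]; exact hb
    exact this
  mono_f := by
    rw [ModuleCat.mono_iff_injective, injective_iff_map_eq_zero]
    intro y hy
    obtain ⟨y, rfl⟩ := Submodule.Quotient.mk_surjective _ y
    have hy' : (Submodule.Quotient.mk (p := A) y, Submodule.Quotient.mk (p := B) y) = (0, 0) := hy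
    rw [Prod.mk.injEq, Submodule.Quotient.mk_eq_zero, Submodule.Quotient.mk_eq_zero] at hy'
    refine (Submodule.Quotient.mk_eq_zero _).2 ?_
    rw [hC]
    exact hy'
  epi_g := by
    rw [ModuleCat.epi_iff_surjective]
    intro y
    obtain ⟨y, rfl⟩ := Submodule.Quotient.mk_surjective _ y
    refine ⟨(Submodule.Quotient.mk y, 0), ?_⟩
    have : Submodule.Quotient.mk (p := D) y + - 0 = Submodule.Quotient.mk y := by simp
    exact this

lemma hasPD_prod {R : Type} [CommRing R] (M N : Type) [AddCommGroup M] [Module R M]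
    [AddCommGroup N] [Module R N] (n : ℕ)
    (h1 : HasProjectiveDimensionLT (ModuleCat.of R M) n)
    (h2 : HasProjectiveDimensionLT (ModuleCat.of R N) n) :
    HasProjectiveDimensionLT (ModuleCat.of R (M × N)) n :=
  hasProjectiveDimensionLT_of_iso (ModuleCat.biprodIsoProd (ModuleCat.of R M) (ModuleCat.of R N)) n

lemma mul_pd {R : Type} [CommRing R] (A B : Ideal R) (x : R)
    (hB : B = A ⊔ Ideal.span {x}) (hx : ∀ y, x * y ∈ A → y ∈ A) (n : ℕ)
    (h : HasProjectiveDimensionLT (ModuleCat.of R (R ⧸ A)) n) :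
    HasProjectiveDimensionLT (ModuleCat.of R (R ⧸ B)) (n + 1) := by
  have h2 : HasProjectiveDimensionLT (ModuleCat.of R (R ⧸ A)) (n + 1) :=
    hasProjectiveDimensionLT_of_ge _ n _ (by omega)
  exact (mulSC_shortExact A B x hB hx).hasProjectiveDimensionLT_X₃ n h h2

lemma mul_ext {R : Type} [CommRing R] (A B : Ideal R) (x : R)
    (hB : B = A ⊔ Ideal.span {x}) (hx : ∀ y, x * y ∈ A → y ∈ A) (n : ℕ) (N : ModuleCat.{0} R)
    (hN : x • 𝟙 N = 0)
    (h : ∃ e : Abelian.Ext.{0} (ModuleCat.of R (R ⧸ A)) N n, e ≠ 0) :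
    ∃ e : Abelian.Ext.{0} (ModuleCat.of R (R ⧸ B)) N (n + 1), e ≠ 0 := by
  obtain ⟨e, he⟩ := h
  have hS := mulSC_shortExact A B x hB hx
  refine ⟨hS.extClass.comp e (add_comm _ _), fun h0 => he ?_⟩
  obtain ⟨e₂, h2⟩ := Abelian.Ext.contravariant_sequence_exact₁ hS _ e (add_comm _ _) h0
  have key : ∀ e₂ : Abelian.Ext.{0} (ModuleCat.of R (R ⧸ A)) N n,
      (Abelian.Ext.mk₀ (x • 𝟙 (ModuleCat.of R (R ⧸ A)))).comp e₂ (zero_add n) = 0 := by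
    intro e₂
    rw [Abelian.Ext.mk₀_smul, Abelian.Ext.smul_comp, Abelian.Ext.mk₀_id_comp,
      Abelian.Ext.smul_eq_comp_mk₀, hN, Abelian.Ext.mk₀_zero, Abelian.Ext.comp_zero]
  exact h2.symm.trans (key e₂)

lemma mv_pd₁ {R : Type} [CommRing R] (A B C D : Ideal R) (hC : C = A ⊓ B) (hD : D = A ⊔ B)
    (n : ℕ) (hA : HasProjectiveDimensionLT (ModuleCat.of R (R ⧸ A)) n)
    (hB : HasProjectiveDimensionLT (ModuleCat.of R (R ⧸ B)) n)
    (h : HasProjectiveDimensionLT (ModuleCat.of R (R ⧸ D)) (n + 1)) :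
    HasProjectiveDimensionLT (ModuleCat.of R (R ⧸ C)) n :=
  (mvSC_shortExact A B C D hC hD).hasProjectiveDimensionLT_X₁ n (hasPD_prod _ _ n hA hB) h

lemma mv_pd₃ {R : Type} [CommRing R] (A B C D : Ideal R) (hC : C = A ⊓ B) (hD : D = A ⊔ B)
    (n : ℕ) (hA : HasProjectiveDimensionLT (ModuleCat.of R (R ⧸ A)) (n + 1))
    (hB : HasProjectiveDimensionLT (ModuleCat.of R (R ⧸ B)) (n + 1))
    (h : HasProjectiveDimensionLT (ModuleCat.of R (R ⧸ C)) n) :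
    HasProjectiveDimensionLT (ModuleCat.of R (R ⧸ D)) (n + 1) :=
  (mvSC_shortExact A B C D hC hD).hasProjectiveDimensionLT_X₃ n h (hasPD_prod _ _ _ hA hB)

section Poly

variable {K : Type} [Field K] {n : ℕ}

/-- The ideal generated by a set of variables. -/
def varIdeal (K : Type) [Field K] {n : ℕ} (S : Set (Fin n)) : Ideal (MvPolynomial (Fin n) K) :=
  Ideal.span (X '' S)

open Classical in
/-- The substitution killing the variables in `S`. -/
def killVars (K : Type) [Field K] {n : ℕ} (S : Set (Fin n)) :
    MvPolynomial (Fin n) K →ₐ[K] MvPolynomial (Fin n) K :=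
  aeval (fun v => if v ∈ S then 0 else X v)

lemma killVars_X_mem {S : Set (Fin n)} {v : Fin n} (h : v ∈ S) : killVars K S (X v) = 0 := by
  simp [killVars, h]

lemma killVars_X_notMem {S : Set (Fin n)} {v : Fin n} (h : v ∉ S) :
    killVars K S (X v) = X v := by
  simp [killVars, h]

lemma killVars_of_mem {S : Set (Fin n)} {a : MvPolynomial (Fin n) K} (h : a ∈ varIdeal K S) :
    killVars K S a = 0 := by
  have : varIdeal K S ≤ RingHom.ker (killVars K S) := by
    refine Ideal.span_le.2 ?_
    rintro _ ⟨v, hv, rfl⟩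
    exact killVars_X_mem hv
  exact this h

lemma sub_killVars_mem (S : Set (Fin n)) (a : MvPolynomial (Fin n) K) :
    a - killVars K S a ∈ varIdeal K S := by
  rw [← Ideal.Quotient.eq]
  have : (Ideal.Quotient.mkₐ K (varIdeal K S)) =
      (Ideal.Quotient.mkₐ K (varIdeal K S)).comp (killVars K S) := by
    apply MvPolynomial.algHom_ext
    intro v
    by_cases hv : v ∈ S
    · simp only [AlgHom.comp_apply, killVars_X_mem hv, map_zero]
      exact Ideal.Quotient.eq_zero_iff_mem.2 (Ideal.subset_span ⟨v, hv, rfl⟩)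
    · simp only [AlgHom.comp_apply, killVars_X_notMem hv]
  exact DFunLike.congr_fun this a

lemma killVars_eq_zero_iff {S : Set (Fin n)} {a : MvPolynomial (Fin n) K} :
    killVars K S a = 0 ↔ a ∈ varIdeal K S := by
  refine ⟨fun h => ?_, killVars_of_mem⟩
  simpa [h] using sub_killVars_mem S a

lemma mem_of_mul_mem {S : Set (Fin n)} {a b : MvPolynomial (Fin n) K}
    (h : a * b ∈ varIdeal K S) : a ∈ varIdeal K S ∨ b ∈ varIdeal K S := by
  simpa [← killVars_eq_zero_iff] using h

lemma X_notMem {S : Set (Fin n)} {v : Fin n} (h : v ∉ S) : X v ∉ varIdeal K S := by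
  rw [← killVars_eq_zero_iff, killVars_X_notMem h]
  exact X_ne_zero v

lemma maxIdeal_eq : maxIdeal K (Fin n) = varIdeal K Set.univ := by
  rw [maxIdeal, varIdeal, Set.image_univ]

lemma varIdeal_le_max (S : Set (Fin n)) : varIdeal K S ≤ maxIdeal K (Fin n) :=
  Ideal.span_mono (Set.image_subset_range _ _)

lemma one_notMem (S : Set (Fin n)) : (1 : MvPolynomial (Fin n) K) ∉ varIdeal K S := by
  rw [← killVars_eq_zero_iff]
  simp

lemma varIdeal_insert (v : Fin n) (S : Set (Fin n)) :
    varIdeal K (insert v S) = varIdeal K S ⊔ Ideal.span {X v} := by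
  rw [varIdeal, varIdeal, Set.image_insert_eq, Ideal.span_insert, sup_comm]

lemma varIdeal_reg (v : Fin n) (S : Set (Fin n)) (hv : v ∉ S) :
    ∀ y, (X v : MvPolynomial (Fin n) K) * y ∈ varIdeal K S → y ∈ varIdeal K S :=
  fun _ hy => (mem_of_mul_mem hy).resolve_left (X_notMem hv)

lemma varIdeal_pd_lt (S : Finset (Fin n)) :
    HasProjectiveDimensionLT (ModuleCat.of (MvPolynomial (Fin n) K)
      (MvPolynomial (Fin n) K ⧸ varIdeal K (S : Set (Fin n)))) (S.card + 1) := by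
  induction S using Finset.induction_on with
  | empty =>
    have h : varIdeal K ((∅ : Finset (Fin n)) : Set (Fin n)) = ⊥ := by simp [varIdeal]
    rw [h]
    have : Projective (ModuleCat.of (MvPolynomial (Fin n) K) (MvPolynomial (Fin n) K)) :=
      ModuleCat.projective_of_free (Module.Basis.singleton Unit _)
    exact hasProjectiveDimensionLT_of_iso
      (X := ModuleCat.of (MvPolynomial (Fin n) K) (MvPolynomial (Fin n) K))
      ((Submodule.quotEquivOfEqBot ⊥ rfl).symm.toModuleIso) 1
  | insert v S hv ih =>
    rw [Finset.card_insert_of_notMem hv, Finset.coe_insert]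
    exact mul_pd _ _ (X v) (varIdeal_insert v _) (varIdeal_reg v _ (by simpa using hv)) _ ih

lemma varIdeal_ext (S : Finset (Fin n)) :
    ∃ e : Abelian.Ext.{0} (ModuleCat.of (MvPolynomial (Fin n) K)
      (MvPolynomial (Fin n) K ⧸ varIdeal K (S : Set (Fin n))))
      (ModuleCat.of (MvPolynomial (Fin n) K)
        (MvPolynomial (Fin n) K ⧸ maxIdeal K (Fin n))) S.card, e ≠ 0 := by
  induction S using Finset.induction_on with
  | empty =>
    rw [Finset.card_empty]
    refine ⟨Abelian.Ext.mk₀ (ModuleCat.ofHom (Submodule.factor (varIdeal_le_max _))), ?_⟩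
    intro h
    rw [Abelian.Ext.mk₀_eq_zero_iff] at h
    have h1 : Submodule.Quotient.mk (p := maxIdeal K (Fin n)) 1 = 0 :=
      congrArg (fun f => f.hom (Submodule.Quotient.mk 1)) h
    rw [Submodule.Quotient.mk_eq_zero, maxIdeal_eq] at h1
    exact one_notMem _ h1
  | insert v S hv ih =>
    rw [Finset.card_insert_of_notMem hv, Finset.coe_insert]
    have hz : (X v : MvPolynomial (Fin n) K) • 𝟙 (ModuleCat.of (MvPolynomial (Fin n) K)
        (MvPolynomial (Fin n) K ⧸ maxIdeal K (Fin n))) = 0 := by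
      apply ModuleCat.hom_ext
      apply LinearMap.ext
      intro y
      obtain ⟨y, rfl⟩ := Submodule.Quotient.mk_surjective _ y
      have : Submodule.Quotient.mk (p := maxIdeal K (Fin n)) (X v * y) = 0 := by
        rw [Submodule.Quotient.mk_eq_zero]
        exact Ideal.mul_mem_right _ _ (Ideal.subset_span ⟨v, rfl⟩)
      exact this
    exact mul_ext _ _ (X v) (varIdeal_insert v _) (varIdeal_reg v _ (by simpa using hv)) _ _ hz ih

lemma max_pd_le : HasProjectiveDimensionLT (ModuleCat.of (MvPolynomial (Fin n) K)
      (MvPolynomial (Fin n) K ⧸ maxIdeal K (Fin n))) (n + 1) := by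
  have h := varIdeal_pd_lt (K := K) (Finset.univ : Finset (Fin n))
  rwa [Finset.coe_univ, ← maxIdeal_eq, Finset.card_univ, Fintype.card_fin] at h

lemma max_pd_ge : ¬ HasProjectiveDimensionLT (ModuleCat.of (MvPolynomial (Fin n) K)
      (MvPolynomial (Fin n) K ⧸ maxIdeal K (Fin n))) n := by
  intro h
  have he := varIdeal_ext (K := K) (Finset.univ : Finset (Fin n))
  rw [Finset.coe_univ, ← maxIdeal_eq, Finset.card_univ, Fintype.card_fin] at he
  obtain ⟨e, he⟩ := he
  exact he (e.eq_zero_of_hasProjectiveDimensionLT n le_rfl)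

lemma varIdeal_compl_pd (S : Set (Fin n)) (hS : S.Nonempty) :
    HasProjectiveDimensionLT (ModuleCat.of (MvPolynomial (Fin n) K)
      (MvPolynomial (Fin n) K ⧸ varIdeal K Sᶜ)) n := by
  classical
  have h := varIdeal_pd_lt (K := K) (Sᶜ).toFinset
  rw [Set.coe_toFinset] at h
  refine @hasProjectiveDimensionLT_of_ge _ _ _ _ _ n ?_ h
  obtain ⟨v, hv⟩ := hS
  have : (Sᶜ).toFinset.card < (Finset.univ : Finset (Fin n)).card :=
    Finset.card_lt_card (Finset.ssubset_univ_iff.2 fun h => by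
      have := Finset.mem_univ v
      rw [← h] at this
      simp [hv] at this)
  simpa using this

variable {k : ℕ} (P : Fin k → Set (Fin n))

lemma sup_aux (i : Fin k) (T : Finset (Fin k)) (hi : i ∉ T) (hT : T.Nonempty)
    (hu : ∀ v, ∃! i, v ∈ P i) :
    maxIdeal K (Fin n) = varIdeal K (P i)ᶜ ⊔ T.inf (fun i => varIdeal K (P i)ᶜ) := by
  apply le_antisymm
  · refine Ideal.span_le.2 ?_
    rintro _ ⟨v, rfl⟩
    by_cases hv : v ∈ P i
    · refine Ideal.mem_sup_right ?_
      have : T.inf (fun i => varIdeal K (P i)ᶜ) ≥ Ideal.span {X v} := by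
        refine Finset.le_inf fun j hj => ?_
        rw [Ideal.span_singleton_le_iff_mem]
        refine Ideal.subset_span ⟨v, fun hvj => ?_, rfl⟩
        exact hi ((hu v).unique hv hvj ▸ hj)
      exact this (Ideal.mem_span_singleton_self _)
    · exact Ideal.mem_sup_left (Ideal.subset_span ⟨v, hv, rfl⟩)
  · refine sup_le (varIdeal_le_max _) ?_
    obtain ⟨j, hj⟩ := hT
    exact (Finset.inf_le hj).trans (varIdeal_le_max _)

lemma inf_pd (T : Finset (Fin k)) (hT : T.Nonempty) (hne : ∀ i, (P i).Nonempty)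
    (hu : ∀ v, ∃! i, v ∈ P i) :
    HasProjectiveDimensionLT (ModuleCat.of (MvPolynomial (Fin n) K)
      (MvPolynomial (Fin n) K ⧸ T.inf (fun i => varIdeal K (P i)ᶜ))) n := by
  induction hT using Finset.Nonempty.cons_induction with
  | singleton i =>
    rw [Finset.inf_singleton]
    exact varIdeal_compl_pd _ (hne i)
  | cons i T hi hT ih =>
    have hC : (Finset.cons i T hi).inf (fun i => varIdeal K (P i)ᶜ) =
        varIdeal K (P i)ᶜ ⊓ T.inf (fun i => varIdeal K (P i)ᶜ) := Finset.inf_cons hi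
    exact mv_pd₁ _ _ _ (maxIdeal K (Fin n)) hC (sup_aux P i T hi hT hu) n
      (varIdeal_compl_pd _ (hne i)) ih max_pd_le

lemma inf_pd_ge (i : Fin k) (T : Finset (Fin k)) (hi : i ∉ T) (hT : T.Nonempty)
    (hne : ∀ i, (P i).Nonempty) (hu : ∀ v, ∃! i, v ∈ P i) (m : ℕ) (hm : m + 1 = n) :
    ¬ HasProjectiveDimensionLT (ModuleCat.of (MvPolynomial (Fin n) K)
      (MvPolynomial (Fin n) K ⧸ (Finset.cons i T hi).inf (fun i => varIdeal K (P i)ᶜ))) m := by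
  intro h
  subst hm
  have hC : (Finset.cons i T hi).inf (fun i => varIdeal K (P i)ᶜ) =
      varIdeal K (P i)ᶜ ⊓ T.inf (fun i => varIdeal K (P i)ᶜ) := Finset.inf_cons hi
  exact max_pd_ge (mv_pd₃ _ _ _ (maxIdeal K _) hC (sup_aux P i T hi hT hu) m
      (varIdeal_compl_pd _ (hne i)) (inf_pd P T hT hne hu) h)

lemma edgeIdeal_eq_s9 (G : SimpleGraph (Fin n)) (hk : 0 < k)
    (hu : ∀ v, ∃! i, v ∈ P i) (h1 : ∀ i, ∀ u ∈ P i, ∀ v ∈ P i, ¬ G.Adj u v)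
    (h2 : ∀ i j, i ≠ j → ∀ u ∈ P i, ∀ v ∈ P j, G.Adj u v) :
    edgeIdeal K G = Finset.univ.inf (fun i => varIdeal K (P i)ᶜ) := by
  apply le_antisymm
  · refine Finset.le_inf fun i _ => Ideal.span_le.2 ?_
    rintro _ ⟨u, v, huv, rfl⟩
    by_cases hui : u ∈ P i
    · by_cases hvi : v ∈ P i
      · exact absurd huv (h1 i u hui v hvi)
      · exact Ideal.mul_mem_left _ _ (Ideal.subset_span ⟨v, hvi, rfl⟩)
    · exact Ideal.mul_mem_right _ _ (Ideal.subset_span ⟨u, hui, rfl⟩)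
  · intro f hf
    have hf' : ∀ i, f ∈ varIdeal K (P i)ᶜ := fun i =>
      (Finset.inf_le (f := fun i => varIdeal K (P i)ᶜ) (Finset.mem_univ i) : _ ≤ _) hf
    have he : edgeIdeal K G = Ideal.span ((fun s => monomial s (1 : K)) ''
        {s | ∃ u v, G.Adj u v ∧ s = Finsupp.single u 1 + Finsupp.single v 1}) := by
      unfold edgeIdeal
      congr 1
      ext m
      constructor
      · rintro ⟨u, v, huv, rfl⟩
        exact ⟨_, ⟨u, v, huv, rfl⟩, by simp [X, monomial_mul]⟩
      · rintro ⟨_, ⟨u, v, huv, rfl⟩, rfl⟩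
        exact ⟨u, v, huv, by simp [X, monomial_mul]⟩
    rw [he, mem_ideal_span_monomial_image]
    intro m hm
    have hex : ∀ i, ∃ v, v ∉ P i ∧ m v ≠ 0 := fun i =>
      mem_ideal_span_X_image.1 (hf' i) m hm
    obtain ⟨v, -, hmv⟩ := hex ⟨0, hk⟩
    obtain ⟨j, hj, -⟩ := hu v
    obtain ⟨w, hw, hmw⟩ := hex j
    obtain ⟨l, hl, -⟩ := hu w
    have hjl : j ≠ l := fun h => hw (h ▸ hl)
    have hvw := h2 j l hjl v hj w hl
    refine ⟨_, ⟨v, w, hvw, rfl⟩, fun z => ?_⟩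
    have := hvw.ne
    simp only [Finsupp.add_apply, Finsupp.single_apply]
    split_ifs with ha hb hb
    · exact absurd (ha.trans hb.symm) this
    · subst ha; omega
    · subst hb; omega
    · omega

lemma mem_edge_iff {G : SimpleGraph (Fin n)}
    (hG : edgeIdeal K G = Finset.univ.inf (fun i => varIdeal K (P i)ᶜ))
    (f : MvPolynomial (Fin n) K) :
    f ∈ edgeIdeal K G ↔ ∀ i, f ∈ varIdeal K (P i)ᶜ := by
  rw [hG, Submodule.mem_finsetInf]
  simp

lemma smulRegular_iff {R : Type} [CommRing R] (I : Ideal R) (a : R) :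
    IsSMulRegular (R ⧸ I) a ↔ ∀ y, a * y ∈ I → y ∈ I := by
  rw [isSMulRegular_iff_right_eq_zero_of_smul]
  constructor
  · intro h y hy
    exact (Submodule.Quotient.mk_eq_zero _).1
      (h (Submodule.Quotient.mk y) ((Submodule.Quotient.mk_eq_zero I).2 hy))
  · intro h y hy
    obtain ⟨y, rfl⟩ := Submodule.Quotient.mk_surjective _ y
    exact (Submodule.Quotient.mk_eq_zero _).2 (h y ((Submodule.Quotient.mk_eq_zero I).1 hy))

lemma sum_notMem (S : Set (Fin n)) (hS : S.Nonempty) :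
    (∑ v, X v : MvPolynomial (Fin n) K) ∉ varIdeal K Sᶜ := by
  classical
  obtain ⟨v, hv⟩ := hS
  intro h
  have h1 : varIdeal K Sᶜ ≤ RingHom.ker (eval (Pi.single v (1 : K))) := by
    refine Ideal.span_le.2 ?_
    rintro _ ⟨w, hw, rfl⟩
    have : w ≠ v := fun h => hw (h ▸ hv)
    simp [RingHom.mem_ker, Pi.single_apply, this]
  have h2 := h1 h
  rw [RingHom.mem_ker, map_sum] at h2
  simp [Pi.single_apply] at h2

lemma mul_mem_of_gens {I : Ideal (MvPolynomial (Fin n) K)} {b z : MvPolynomial (Fin n) K}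
    (hb : b ∈ maxIdeal K (Fin n)) (h : ∀ v, X v * z ∈ I) : b * z ∈ I := by
  have : maxIdeal K (Fin n) ≤ Submodule.comap (LinearMap.mulRight (MvPolynomial (Fin n) K) z) I := by
    refine Submodule.span_le.2 ?_
    rintro _ ⟨v, rfl⟩
    exact h v
  exact this hb

lemma killVars_mem_max (S : Set (Fin n)) {a : MvPolynomial (Fin n) K}
    (ha : a ∈ maxIdeal K (Fin n)) : killVars K S a ∈ maxIdeal K (Fin n) := by
  have h := varIdeal_le_max S (sub_killVars_mem (K := K) S a)
  simpa using (maxIdeal K (Fin n)).sub_mem ha h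

/-- Socle argument: the depth is at most one. -/
lemma no_two (G : SimpleGraph (Fin n)) (hne : ∀ i, (P i).Nonempty)
    (hu : ∀ v, ∃! i, v ∈ P i)
    (hG : edgeIdeal K G = Finset.univ.inf (fun i => varIdeal K (P i)ᶜ))
    (i j : Fin k) (hij : i ≠ j) (a b : MvPolynomial (Fin n) K)
    (ha : a ∈ maxIdeal K (Fin n)) (hb : b ∈ maxIdeal K (Fin n))
    (ra : ∀ y, a * y ∈ edgeIdeal K G → y ∈ edgeIdeal K G)
    (rb : ∀ y, b * y ∈ edgeIdeal K G ⊔ Ideal.span {a} → y ∈ edgeIdeal K G ⊔ Ideal.span {a}) :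
    False := by
  -- `a` avoids every minimal prime
  have ha' : ∀ l, a ∉ varIdeal K (P l)ᶜ := by
    intro l hl
    obtain ⟨v, hv⟩ := hne l
    have h1 : X v ∈ edgeIdeal K G := by
      apply ra
      rw [mem_edge_iff P hG]
      intro m
      by_cases hm : m = l
      · subst hm
        exact Ideal.mul_mem_right _ _ hl
      · exact Ideal.mul_mem_left _ _
          (Ideal.subset_span ⟨v, fun h => hm ((hu v).unique h hv), rfl⟩)
    exact X_notMem (S := (P l)ᶜ) (fun h => h hv) ((mem_edge_iff P hG _).1 h1 l)
  have hz : killVars K (P i)ᶜ a ∈ edgeIdeal K G ⊔ Ideal.span {a} := by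
    apply rb
    refine mul_mem_of_gens hb fun v => ?_
    by_cases hv : v ∈ P i
    · have h1 : X v * (a - killVars K (P i)ᶜ a) ∈ edgeIdeal K G := by
        rw [mem_edge_iff P hG]
        intro m
        by_cases hm : m = i
        · subst hm
          exact Ideal.mul_mem_left _ _ (sub_killVars_mem _ _)
        · exact Ideal.mul_mem_right _ _
            (Ideal.subset_span ⟨v, fun h => hm ((hu v).unique h hv), rfl⟩)
      have h2 : X v * killVars K (P i)ᶜ a = X v * a - X v * (a - killVars K (P i)ᶜ a) := by
        ring
      rw [h2]
      exact Ideal.sub_mem _ (Ideal.mem_sup_right (Ideal.mul_mem_left _ _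
        (Ideal.mem_span_singleton_self a))) (Ideal.mem_sup_left h1)
    · refine Ideal.mem_sup_left ?_
      rw [mem_edge_iff P hG]
      intro m
      by_cases hm : m = i
      · subst hm
        exact Ideal.mul_mem_right _ _ (Ideal.subset_span ⟨v, hv, rfl⟩)
      · refine Ideal.mul_mem_left _ _ ?_
        rw [← killVars_eq_zero_iff]
        have : maxIdeal K (Fin n) ≤ RingHom.ker
            ((killVars K (P m)ᶜ).comp (killVars K (P i)ᶜ)) := by
          refine Ideal.span_le.2 ?_
          rintro _ ⟨w, rfl⟩
          change killVars K (P m)ᶜ (killVars K (P i)ᶜ (X w)) = 0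
          by_cases hw : w ∈ P i
          · rw [killVars_X_notMem (by simpa using hw),
              killVars_X_mem (S := (P m)ᶜ) (fun h => hm ((hu w).unique h hw))]
          · rw [killVars_X_mem hw, map_zero]
        exact this ha
  obtain ⟨e, he, c, hc, hec⟩ := Submodule.mem_sup.1 hz
  obtain ⟨y, rfl⟩ := Ideal.mem_span_singleton'.1 hc
  rw [mem_edge_iff P hG] at he
  -- component `i`: `y = 1`
  have h1 : y - 1 ∈ varIdeal K (P i)ᶜ := by
    refine (mem_of_mul_mem (a := a) ?_).resolve_left (ha' i)
    have : a * (y - 1) = -(a - killVars K (P i)ᶜ a) - e := by rw [← hec]; ring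
    rw [this]
    exact Ideal.sub_mem _ (Ideal.neg_mem_iff _ |>.2 (sub_killVars_mem _ _)) (he i)
  -- component `j`: `y = 0`
  have h2 : y ∈ varIdeal K (P j)ᶜ := by
    refine (mem_of_mul_mem (a := a) ?_).resolve_left (ha' j)
    have : a * y = killVars K (P i)ᶜ a - e := by rw [← hec]; ring
    rw [this]
    refine Ideal.sub_mem _ ?_ (he j)
    rw [← killVars_eq_zero_iff]
    have : maxIdeal K (Fin n) ≤ RingHom.ker
        ((killVars K (P j)ᶜ).comp (killVars K (P i)ᶜ)) := by
      refine Ideal.span_le.2 ?_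
      rintro _ ⟨w, rfl⟩
      change killVars K (P j)ᶜ (killVars K (P i)ᶜ (X w)) = 0
      by_cases hw : w ∈ P i
      · rw [killVars_X_notMem (by simpa using hw),
          killVars_X_mem (S := (P j)ᶜ) (fun h => hij ((hu w).unique hw h))]
      · rw [killVars_X_mem hw, map_zero]
    exact this ha
  have h3 := (maxIdeal K (Fin n)).sub_mem (varIdeal_le_max _ h2) (varIdeal_le_max _ h1)
  rw [sub_sub_cancel, maxIdeal_eq] at h3
  exact one_notMem _ h3

lemma regular_cons_cons {R : Type} [CommRing R] (I : Ideal R) (a b : R) (rs : List R)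
    (h : RingTheory.Sequence.IsRegular (R ⧸ I) (a :: b :: rs)) :
    (∀ y, a * y ∈ I → y ∈ I) ∧
      (∀ y, b * y ∈ I ⊔ Ideal.span {a} → y ∈ I ⊔ Ideal.span {a}) := by
  rw [RingTheory.Sequence.isRegular_cons_iff, RingTheory.Sequence.isRegular_cons_iff] at h
  obtain ⟨h1, h2, -⟩ := h
  refine ⟨(smulRegular_iff I a).1 h1, fun y hy => ?_⟩
  rw [isSMulRegular_iff_right_eq_zero_of_smul] at h2
  have key : ∀ z : R, (Submodule.Quotient.mk (Submodule.Quotient.mk z : R ⧸ I) :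
      QuotSMulTop a (R ⧸ I)) = 0 ↔ z ∈ I ⊔ Ideal.span {a} := by
    intro z
    rw [Submodule.Quotient.mk_eq_zero, Submodule.mem_smul_pointwise_iff_exists,
      Submodule.mem_sup]
    constructor
    · rintro ⟨w, -, hw⟩
      obtain ⟨w, rfl⟩ := Submodule.Quotient.mk_surjective _ w
      have hw' : Submodule.Quotient.mk (p := I) (a * w) = Submodule.Quotient.mk z := hw
      rw [Submodule.Quotient.eq] at hw'
      exact ⟨_, I.neg_mem hw', a * w,
        Ideal.mul_mem_right _ _ (Ideal.mem_span_singleton_self a), by ring⟩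
    · rintro ⟨e, he, c, hc, rfl⟩
      obtain ⟨w, rfl⟩ := Ideal.mem_span_singleton'.1 hc
      refine ⟨Submodule.Quotient.mk w, trivial, ?_⟩
      have : Submodule.Quotient.mk (p := I) (a * w) = Submodule.Quotient.mk (e + w * a) := by
        rw [Submodule.Quotient.eq]
        have : a * w - (e + w * a) = - e := by ring
        rw [this]
        exact I.neg_mem he
      exact this
  exact (key y).1 (h2 _ ((key (b * y)).2 hy))

lemma regular_singleton {R : Type} [CommRing R] (I J : Ideal R) (hIJ : I ≤ J) (hJ : (1 : R) ∉ J)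
    (a : R) (haJ : a ∈ J) (ha : ∀ y, a * y ∈ I → y ∈ I) :
    RingTheory.Sequence.IsRegular (R ⧸ I) [a] := by
  refine ⟨(RingTheory.Sequence.isWeaklyRegular_singleton_iff _ a).2 ((smulRegular_iff I a).2 ha),
    fun h => hJ ?_⟩
  have hle : Ideal.ofList [a] • (⊤ : Submodule R (R ⧸ I)) ≤
      LinearMap.ker (Submodule.factor hIJ) := by
    rw [Submodule.smul_le]
    intro r hr x _
    obtain ⟨x, rfl⟩ := Submodule.Quotient.mk_surjective _ x
    have hr' : r ∈ J := by
      rw [Ideal.ofList_singleton] at hr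
      exact (Ideal.span_singleton_le_iff_mem _).2 haJ hr
    have : Submodule.Quotient.mk (p := J) (r * x) = 0 :=
      (Submodule.Quotient.mk_eq_zero _).2 (Ideal.mul_mem_right _ _ hr')
    exact this
  rw [← h] at hle
  have h1 : Submodule.Quotient.mk (p := J) 1 = 0 :=
    hle (Submodule.mem_top (x := Submodule.Quotient.mk (1 : R)))
  exact (Submodule.Quotient.mk_eq_zero _).1 h1

end Poly

/-- For a complete multipartite graph `G` on `n` vertices with at least one
edge, `depth(R/I(G)) = 1`; equivalently, `pd(R/I(G)) = n - 1`. -/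
theorem depth_eq_one_of_isCompleteMultipartite
    {K : Type} [Field K] {n : ℕ} (G : SimpleGraph (Fin n))
    (hG : IsCompleteMultipartite G) (hE : G.edgeSet.Nonempty) :
    mdepth (maxIdeal K (Fin n)) (MvPolynomial (Fin n) K ⧸ edgeIdeal K G) = 1 ∧
    projDim (MvPolynomial (Fin n) K)
      (ModuleCat.of (MvPolynomial (Fin n) K)
        (MvPolynomial (Fin n) K ⧸ edgeIdeal K G)) = n - 1 := by
  obtain ⟨k, P, hne, hu, h1, h2⟩ := hG
  obtain ⟨x, hx⟩ := hE
  induction x using Sym2.ind with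
  | _ u v =>
  have huv : G.Adj u v := hx
  obtain ⟨i, hi, -⟩ := hu u
  obtain ⟨j, hj, -⟩ := hu v
  have hij : i ≠ j := by
    rintro rfl
    exact h1 i u hi v hj huv
  have hE := edgeIdeal_eq_s9 (K := K) P G (Fin.pos i) hu h1 h2
  have hn : 0 < n := Fin.pos u
  constructor
  · have hmem : (1 : ℕ) ∈ {k | ∃ rs : List (MvPolynomial (Fin n) K), rs.length = k ∧
        (∀ r ∈ rs, r ∈ maxIdeal K (Fin n)) ∧
        RingTheory.Sequence.IsRegular (MvPolynomial (Fin n) K ⧸ edgeIdeal K G) rs} := by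
      have hs : (∑ v, X v : MvPolynomial (Fin n) K) ∈ maxIdeal K (Fin n) :=
        Ideal.sum_mem _ fun v _ => Ideal.subset_span ⟨v, rfl⟩
      refine ⟨[∑ v, X v], rfl, by simpa using hs, ?_⟩
      refine regular_singleton _ (maxIdeal K (Fin n)) ?_ ?_ _ hs ?_
      · intro f hf
        exact varIdeal_le_max _ ((mem_edge_iff P hE f).1 hf i)
      · rw [maxIdeal_eq]
        exact one_notMem _
      · intro y hy
        rw [mem_edge_iff P hE] at hy ⊢
        exact fun l => (mem_of_mul_mem (hy l)).resolve_left (sum_notMem _ (hne l))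
    have hub : ∀ b ∈ {k | ∃ rs : List (MvPolynomial (Fin n) K), rs.length = k ∧
        (∀ r ∈ rs, r ∈ maxIdeal K (Fin n)) ∧
        RingTheory.Sequence.IsRegular (MvPolynomial (Fin n) K ⧸ edgeIdeal K G) rs}, b ≤ 1 := by
      rintro _ ⟨rs, rfl, hrs, hreg⟩
      match rs, hrs, hreg with
      | [], _, _ => simp
      | [_], _, _ => simp
      | a :: b :: rs, hrs, hreg =>
        obtain ⟨ra, rb⟩ := regular_cons_cons _ a b rs hreg
        exact (no_two P G hne hu hE i j hij a b (hrs a (by simp)) (hrs b (by simp)) ra rb).elim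
    exact le_antisymm (csSup_le ⟨1, hmem⟩ hub) (le_csSup ⟨1, hub⟩ hmem)
  · apply projDim_eq
    · rw [Nat.sub_add_cancel hn, hE]
      exact inf_pd P _ ⟨i, Finset.mem_univ i⟩ hne hu
    · have hc : (Finset.univ : Finset (Fin k)) =
          Finset.cons i (Finset.univ.erase i) (by simp) := by simp
      rw [hE, hc]
      exact inf_pd_ge P i _ (by simp) ⟨j, by simp [hij.symm]⟩ hne hu _ (Nat.sub_add_cancel hn)

end
end
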